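/- Let Ĉ₅ be the graph obtained from a cycle of length five by adding a new vertex adjacent to exactly two vertices of the cycle, these two vertices being adjacent to each other. Then there exists a real number τ > 0 such that every graph G that is both Ĉ₅-free and (complement of Ĉ₅)-free satisfies max(α(G), ω(G)) ≥ |G|^τ. -/

import Mathlib

open SimpleGraph

/-- The independence (stable set) number of a graph: the clique number of the complement. -/
noncomputable def alphaNum {V : Type*} (G : SimpleGraph V) : ℕ := Gᶜ.cliqueNum

/-- The clique number of a graph. -/
noncomputable def omegaNum {V : Type*} (G : SimpleGraph V) : ℕ := G.cliqueNum

/-- κ(G) = α(G)·ω(G). -/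
noncomputable def kappaNum {V : Type*} (G : SimpleGraph V) : ℕ := alphaNum G * omegaNum G

/-- `Ĉ₅`: the five-vertex cycle `0-1-2-3-4-0` together with a sixth vertex `5` adjacent to
exactly the two (adjacent) vertices `0` and `1` of the cycle. -/
def hatC5 : SimpleGraph (Fin 6) :=
  SimpleGraph.fromEdgeSet {s(0, 1), s(1, 2), s(2, 3), s(3, 4), s(4, 0), s(5, 0), s(5, 1)}

/-!
Suppose the theorem fails, and for a large `D` take a minimal vertex set `X` with
`(α(X) * ω(X)) ^ D < |X|`. Rödl's theorem gives `S ⊆ X` of linear size that is sparse in `G` or in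
its complement; the hypotheses are symmetric, so let it be `G`. By minimality, among any `k ≥ 2`
pairwise anticomplete subsets of `X` one has size less than `|X| / k ^ D`.

Let `I` be a stable set of neighbours of a vertex `v`, each with many private neighbours among the
nonneighbours of `v`. By minimality, each of these private neighbourhoods contains a large connected
set. If `G` is `Ĉ₅`-free, any two of these connected sets are complete or anticomplete to each
other, and no three of them are pairwise complete; a triangle-free graph has a large stable set, so
many of the connected sets are pairwise anticomplete, a contradiction.

Hence, if `v` has maximum degree in `R ⊆ S`, a stable set of its neighbours in `R` has few
neighbours in `R`. Greedily taking a maximum such stable set, and deleting it together with its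
neighbours, builds a stable set in `S` with more than `α(X)` vertices.
-/

section
open Finset

variable {V : Type*}

/-! ### Neighbours in a set and Rödl's theorem -/

open Classical in
/-- The neighbours of `v` in `S`. -/
noncomputable def neighborsIn (G : SimpleGraph V) (S : Finset V) (v : V) : Finset V :=
  {u ∈ S | G.Adj v u}

lemma mem_neighborsIn {G : SimpleGraph V} {S : Finset V} {u v : V} :
    u ∈ neighborsIn G S v ↔ u ∈ S ∧ G.Adj v u := by
  simp [neighborsIn]

lemma neighborsIn_subset (G : SimpleGraph V) (S : Finset V) (v : V) : neighborsIn G S v ⊆ S :=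
  fun _ hu => (mem_neighborsIn.1 hu).1

lemma neighborsIn_mono {G : SimpleGraph V} {S T : Finset V} (h : S ⊆ T) (v : V) :
    neighborsIn G S v ⊆ neighborsIn G T v := fun _ hu =>
  mem_neighborsIn.2 ⟨h (mem_neighborsIn.1 hu).1, (mem_neighborsIn.1 hu).2⟩

/-- Every vertex of `A` has at most `ε * |B|` neighbours in `B`. The graph induced on `S` is
`ε`-sparse if `IsSparseTo G ε S S`. -/
def IsSparseTo (G : SimpleGraph V) (ε : ℝ) (A B : Finset V) : Prop :=
  ∀ a ∈ A, (#(neighborsIn G B a) : ℝ) ≤ ε * #B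

lemma exists_isSparseTo_of_forall_exists {W : Type*} {K : W → SimpleGraph V} {ε : ℝ}
    {A : Finset V} {s : Finset W} {U : W → Finset V} (hA : A.Nonempty)
    (h : ∀ a ∈ A, ∃ j ∈ s, (#(neighborsIn (K j) (U j) a) : ℝ) ≤ ε * #(U j)) :
    ∃ j ∈ s, ∃ A' ⊆ A, (#A : ℝ) ≤ #s * #A' ∧ IsSparseTo (K j) ε A' (U j) := by
  classical
  obtain ⟨a, ha⟩ := hA
  have : Nonempty W := ⟨(h a ha).choose⟩
  choose! g hgs hg using h
  have hs : (0 : ℝ) < #s := by exact_mod_cast card_pos.2 ⟨g a, hgs a ha⟩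
  obtain ⟨j, hj, hfiber⟩ := exists_le_card_fiber_of_nsmul_le_card_of_maps_to hgs ⟨g a, hgs a ha⟩
    (b := (#A / #s : ℝ)) (by rw [nsmul_eq_mul, mul_div_cancel₀ _ hs.ne'])
  refine ⟨j, hj, {v ∈ A | g v = j}, filter_subset _ _, (div_le_iff₀' hs).1 hfiber, fun v hv => ?_⟩
  obtain ⟨hvA, rfl⟩ := mem_filter.1 hv
  exact hg v hvA

lemma adj_update_iff_of_forall_mem {W : Type*} [DecidableEq W] {H : SimpleGraph W}
    {G : SimpleGraph V} {i : W} {s : Finset W} {f : W → V} {v : V} (hi : i ∉ s)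
    (hv : ∀ j ∈ s, G.Adj v (f j) ↔ H.Adj i j)
    (hf : ∀ j ∈ s, ∀ k ∈ s, G.Adj (f j) (f k) ↔ H.Adj j k) :
    ∀ j ∈ insert i s, ∀ k ∈ insert i s,
      G.Adj (Function.update f i v j) (Function.update f i v k) ↔ H.Adj j k := by
  have hne : ∀ j ∈ s, j ≠ i := fun j hj h => hi (h ▸ hj)
  simp only [forall_mem_insert]
  refine ⟨⟨by simp, fun j hj => ?_⟩, fun j hj => ⟨?_, fun k hk => ?_⟩⟩
  · simpa [hne j hj] using hv j hj
  · simpa [hne j hj, G.adj_comm, H.adj_comm] using hv j hj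
  · simpa [hne j hj, hne k hk] using hf j hj k hk

lemma exists_map_or_isSparseTo {W : Type*} [Nonempty V] (H : SimpleGraph W) (G : SimpleGraph V)
    {ε u : ℝ} (hε : 0 < ε) (hε1 : ε ≤ 1) (hu : 0 < u) (s : Finset W) (U : W → Finset V)
    (hU : ∀ i ∈ s, u ≤ #(U i)) :
    (∃ f : W → V, (∀ i ∈ s, f i ∈ U i) ∧ ∀ i ∈ s, ∀ j ∈ s, G.Adj (f i) (f j) ↔ H.Adj i j) ∨
    ∃ i ∈ s, ∃ j ∈ s, i ≠ j ∧ ∃ A ⊆ U i, ∃ B ⊆ U j, ε ^ #s * u ≤ #s * #A ∧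
      ε ^ #s * u ≤ #s * #B ∧ (IsSparseTo G ε A B ∨ IsSparseTo Gᶜ ε A B) := by
  classical
  induction s using Finset.induction_on generalizing u U with
  | empty => exact .inl ⟨fun _ => Classical.arbitrary V, by simp⟩
  | insert i s hi ih =>
    rw [card_insert_of_notMem hi, Nat.cast_add_one]
    have hUi := hU i (mem_insert_self i s)
    have hUs : ∀ j ∈ s, u ≤ #(U j) := fun j hj => hU j (mem_insert_of_mem hj)
    have hne : ∀ j ∈ s, j ≠ i := fun j hj h => hi (h ▸ hj)
    let K (j : W) : SimpleGraph V := if H.Adj i j then G else Gᶜ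
    have hK : ∀ {j v w}, (K j).Adj v w → (G.Adj v w ↔ H.Adj i j) := by
      intro j v w
      by_cases h : H.Adj i j <;> simp +contextual [K, h]
    by_cases hgood : ∃ v ∈ U i, ∀ j ∈ s, ε * #(U j) ≤ #(neighborsIn (K j) (U j) v)
    · obtain ⟨v, hv, hcand⟩ := hgood
      rcases ih (mul_pos hε hu) (fun j => neighborsIn (K j) (U j) v) (fun j hj =>
        (hcand j hj).trans' (mul_le_mul_of_nonneg_left (hUs j hj) hε.le)) with
        ⟨f, hfU, hf⟩ | ⟨j, hj, k, hk, hjk, A, hA, B, hB, hAc, hBc, hAB⟩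
      · refine .inl ⟨Function.update f i v, ?_, adj_update_iff_of_forall_mem hi
          (fun j hj => hK (mem_neighborsIn.1 (hfU j hj)).2) hf⟩
        rw [forall_mem_insert]
        exact ⟨by simpa using hv, fun j hj => by
          simpa [hne j hj] using neighborsIn_subset _ _ _ (hfU j hj)⟩
      · refine .inr ⟨j, mem_insert_of_mem hj, k, mem_insert_of_mem hk, hjk,
          A, hA.trans (neighborsIn_subset _ _ _), B, hB.trans (neighborsIn_subset _ _ _), ?_, ?_,
          hAB⟩
        · nlinarith [pow_succ ε #s, (#A).cast_nonneg (α := ℝ)]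
        · nlinarith [pow_succ ε #s, (#B).cast_nonneg (α := ℝ)]
    · push Not at hgood
      have hUi0 : (U i).Nonempty := card_pos.1 (by exact_mod_cast hu.trans_le hUi)
      obtain ⟨j, hj, A, hA, hAc, hAB⟩ := exists_isSparseTo_of_forall_exists hUi0 fun v hv =>
        (hgood v hv).imp fun _ h => ⟨h.1, h.2.le⟩
      have hle : ε ^ (#s + 1) * u ≤ u := mul_le_of_le_one_left hu.le (pow_le_one₀ hε.le hε1)
      refine .inr ⟨i, mem_insert_self i s, j, mem_insert_of_mem hj, (hne j hj).symm, A, hA, U j,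
        Subset.rfl, ?_, ?_, ?_⟩
      · linarith [(#A).cast_nonneg (α := ℝ)]
      · nlinarith [hUs j hj, (#s).cast_nonneg (α := ℝ)]
      · by_cases h : H.Adj i j
        · exact .inl (by simpa [K, h] using hAB)
        · exact .inr (by simpa [K, h] using hAB)

lemma exists_pairwise_disjoint_subset {W : Type*} [Fintype W] {X : Finset V}
    (hX : Fintype.card W ≤ #X) :
    ∃ P : W → Finset V, (∀ i, P i ⊆ X ∧ #X ≤ 2 * Fintype.card W * #(P i)) ∧
      Pairwise fun i j => Disjoint (P i) (P j) := by
  classical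
  rcases isEmpty_or_nonempty W with hW | hW
  · exact ⟨fun _ => ∅, isEmptyElim, fun i => isEmptyElim i⟩
  have hk : 0 < Fintype.card W := Fintype.card_pos
  obtain ⟨P, hP, hPk⟩ := Finpartition.exists_equipartition_card_eq X hk.ne' hX
  let part : W ≃ P.parts := Fintype.equivOfCardEq (by simp [hPk])
  refine ⟨fun i => part i, fun i => ⟨P.le (part i).2, ?_⟩, fun i j hij =>
    P.disjoint (part i).2 (part j).2 (by simpa [Subtype.val_inj] using hij)⟩
  have hq : 1 ≤ #X / Fintype.card W := (Nat.one_le_div_iff hk).2 hX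
  have hlt := Nat.lt_mul_div_succ #X hk
  calc #X ≤ 2 * Fintype.card W * (#X / Fintype.card W) := by nlinarith
    _ ≤ 2 * Fintype.card W * #(part i).1 := by
      gcongr
      exact hPk ▸ hP.average_le_card_part (part i).2

lemma exists_disjoint_isSparseTo {W : Type*} [Finite W] (H : SimpleGraph W) {ε : ℝ} (hε : 0 < ε)
    (hε1 : ε ≤ 1) :
    ∃ γ : ℝ, 0 < γ ∧ ∀ {V : Type*} (G : SimpleGraph V) (X : Finset V), ¬ H ⊴ G → 1 ≤ γ * #X →
      ∃ A ⊆ X, ∃ B ⊆ X, Disjoint A B ∧ γ * #X ≤ #A ∧ γ * #X ≤ #B ∧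
        (IsSparseTo G ε A B ∨ IsSparseTo Gᶜ ε A B) := by
  classical
  rcases isEmpty_or_nonempty W with hW | hW
  · exact ⟨1, one_pos, fun G X hHG => absurd (.of_isEmpty) hHG⟩
  cases nonempty_fintype W
  set k := Fintype.card W
  have hk : 0 < k := Fintype.card_pos
  refine ⟨ε ^ k / (2 * k ^ 2), by positivity, fun {V} G X hHG hX => ?_⟩
  have hXk : (2 * k ^ 2 : ℝ) ≤ #X := by
    rw [div_mul_eq_mul_div, one_le_div (by positivity)] at hX
    exact hX.trans (mul_le_of_le_one_left (by positivity) (pow_le_one₀ hε.le hε1))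
  have hkX : k ≤ #X := by
    have : 2 * k ^ 2 ≤ #X := by exact_mod_cast hXk
    nlinarith
  obtain ⟨P, hP, hdisj⟩ := exists_pairwise_disjoint_subset hkX
  have hPc : ∀ i ∈ univ, (#X / (2 * k) : ℝ) ≤ #(P i) := fun i _ => by
    rw [div_le_iff₀' (by positivity)]
    exact_mod_cast (hP i).2
  have hlarge : ∀ A : Finset V, ε ^ k * (#X / (2 * k)) ≤ k * #A →
      ε ^ k / (2 * k ^ 2) * #X ≤ #A := fun A hA => by
    refine le_of_mul_le_mul_left (hA.trans' (le_of_eq ?_)) (by positivity : (0 : ℝ) < k)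
    field_simp
  obtain ⟨x, -⟩ : X.Nonempty := card_pos.1 (hk.trans_le hkX)
  have hX0 : (0 : ℝ) < #X := hXk.trans_lt' (by positivity)
  rcases @exists_map_or_isSparseTo _ _ ⟨x⟩ H G _ (#X / (2 * k)) hε hε1 (by positivity) univ P hPc
    with ⟨f, hfU, hf⟩ | ⟨i, -, j, -, hij, A, hA, B, hB, hAc, hBc, hAB⟩
  · have hinj : Function.Injective f := fun i j hfij => by
      by_contra hij
      exact disjoint_left.1 (hdisj hij) (hfU i (mem_univ i)) (hfij ▸ hfU j (mem_univ j))
    exact absurd ⟨⟨⟨f, hinj⟩, fun {i j} => hf i (mem_univ i) j (mem_univ j)⟩⟩ hHG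
  · exact ⟨A, hA.trans (hP i).1, B, hB.trans (hP j).1, (hdisj hij).mono hA hB, hlarge A hAc,
      hlarge B hBc, hAB⟩

/-- The number of pairs in `S × T` that are adjacent in `G`. -/
noncomputable def edgeCount (G : SimpleGraph V) (S T : Finset V) : ℕ :=
  ∑ a ∈ S, #(neighborsIn G T a)

lemma edgeCount_comm (G : SimpleGraph V) (S T : Finset V) :
    edgeCount G S T = edgeCount G T S := by
  classical
  simp only [edgeCount, neighborsIn, card_filter]
  rw [sum_comm]
  simp only [G.adj_comm]

lemma edgeCount_le_card_mul_card (G : SimpleGraph V) (S T : Finset V) :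
    edgeCount G S T ≤ #S * #T :=
  sum_le_card_nsmul _ _ _ fun a _ => card_le_card (neighborsIn_subset G T a)

lemma edgeCount_union_left [DecidableEq V] (G : SimpleGraph V) {A B : Finset V}
    (h : Disjoint A B) (T : Finset V) :
    edgeCount G (A ∪ B) T = edgeCount G A T + edgeCount G B T :=
  sum_union h

lemma edgeCount_union_self [DecidableEq V] (G : SimpleGraph V) {A B : Finset V}
    (h : Disjoint A B) :
    edgeCount G (A ∪ B) (A ∪ B) = edgeCount G A A + edgeCount G B B + 2 * edgeCount G A B := by
  rw [edgeCount_union_left G h, edgeCount_comm G A, edgeCount_comm G B, edgeCount_union_left G h,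
    edgeCount_union_left G h, edgeCount_comm G B A]
  ring

lemma IsSparseTo.edgeCount_le {G : SimpleGraph V} {ε : ℝ} {A B : Finset V}
    (h : IsSparseTo G ε A B) : (edgeCount G A B : ℝ) ≤ ε * #A * #B := by
  rw [edgeCount, Nat.cast_sum]
  calc ∑ a ∈ A, (#(neighborsIn G B a) : ℝ) ≤ #A • (ε * #B) := sum_le_card_nsmul _ _ _ h
    _ = ε * #A * #B := by rw [nsmul_eq_mul]; ring

lemma exists_subset_card_eq_sum_le (f : V → ℝ) {c : ℝ} {m : ℕ} {B : Finset V} (hm : m ≤ #B)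
    (hB : ∑ b ∈ B, f b ≤ c * #B) : ∃ B' ⊆ B, #B' = m ∧ ∑ b ∈ B', f b ≤ c * m := by
  classical
  induction B using Finset.strongInduction with
  | H B ih =>
    rcases hm.eq_or_lt with rfl | hlt
    · exact ⟨B, Subset.rfl, rfl, hB⟩
    obtain ⟨b, hbB, hmax⟩ := exists_max_image B f (card_pos.1 (by omega))
    have herase : ∑ x ∈ B.erase b, f x ≤ c * #(B.erase b) := by
      rcases le_or_gt c (f b) with hcb | hbc
      · rw [cast_card_erase_of_mem hbB]
        linarith [add_sum_erase B f hbB]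
      · rw [mul_comm, ← nsmul_eq_mul]
        exact sum_le_card_nsmul _ _ _ fun x hx => (hmax x (mem_of_mem_erase hx)).trans hbc.le
    obtain ⟨B', hB', h⟩ := ih (B.erase b) (erase_ssubset hbB)
      (by rw [card_erase_of_mem hbB]; omega) herase
    exact ⟨B', hB'.trans (erase_subset b B), h⟩

/-- `S` consists of `s * m` vertices and spans few edges, as the union of `s` blocks of size `m`
does if the edge density between any two of them is at most `ε`. -/
def SparseBlocks (G : SimpleGraph V) (ε : ℝ) (s m : ℕ) (S : Finset V) : Prop :=
  #S = s * m ∧ (edgeCount G S S : ℝ) ≤ s * m ^ 2 + ε * s ^ 2 * m ^ 2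

lemma sparseBlocks_empty (G : SimpleGraph V) {ε : ℝ} (hε : 0 ≤ ε) {s m : ℕ} (h : s * m = 0) :
    SparseBlocks G ε s m ∅ := by
  refine ⟨by simp [h], ?_⟩
  simp only [edgeCount, sum_empty, Nat.cast_zero]
  positivity

lemma SparseBlocks.exists_succ [DecidableEq V] {G : SimpleGraph V} {ε : ℝ} (hε : 0 ≤ ε) {s m : ℕ}
    {A B S : Finset V} (hS : SparseBlocks G ε s m S) (hSA : S ⊆ A) (hAB : Disjoint A B)
    (h : IsSparseTo G ε A B) (hm : m ≤ #B) : ∃ T ⊆ A ∪ B, SparseBlocks G ε (s + 1) m T := by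
  have hSB : ∑ b ∈ B, (#(neighborsIn G S b) : ℝ) ≤ ε * #S * #B := by
    have := IsSparseTo.edgeCount_le fun a ha => h a (hSA ha)
    rwa [edgeCount_comm, edgeCount, Nat.cast_sum] at this
  obtain ⟨B', hB', hc, hs⟩ := exists_subset_card_eq_sum_le _ hm hSB
  have hd : Disjoint S B' := hAB.mono hSA hB'
  refine ⟨S ∪ B', union_subset_union hSA hB', ?_, ?_⟩
  · rw [card_union_of_disjoint hd, hc, hS.1]
    ring
  · have hcross : (edgeCount G S B' : ℝ) ≤ ε * (s * m) * m := by
      rw [edgeCount_comm, edgeCount, Nat.cast_sum]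
      simpa [hS.1] using hs
    have hB'B' : (edgeCount G B' B' : ℝ) ≤ m * m := by
      exact_mod_cast hc ▸ edgeCount_le_card_mul_card G B' B'
    rw [edgeCount_union_self G hd]
    push_cast
    calc (edgeCount G S S + edgeCount G B' B' + 2 * edgeCount G S B' : ℝ)
        ≤ (s * m ^ 2 + ε * s ^ 2 * m ^ 2) + m * m + 2 * (ε * (s * m) * m) := by
          gcongr
          exact hS.2
      _ = (s + 1) * m ^ 2 + ε * (s + 1) ^ 2 * m ^ 2 - ε * m ^ 2 := by ring
      _ ≤ (s + 1) * m ^ 2 + ε * (s + 1) ^ 2 * m ^ 2 := sub_le_self _ (by positivity)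

lemma exists_sparseBlocks {W : Type*} [Finite W] (H : SimpleGraph W) {ε : ℝ} (hε : 0 < ε)
    (hε1 : ε ≤ 1) (s t : ℕ) :
    ∃ δ : ℝ, 0 < δ ∧ ∀ {V : Type*} (G : SimpleGraph V) (X : Finset V) (m : ℕ), ¬ H ⊴ G →
      m ≤ δ * #X →
      (∃ S ⊆ X, SparseBlocks G ε s m S) ∨ ∃ S ⊆ X, SparseBlocks Gᶜ ε t m S := by
  classical
  induction s generalizing t with
  | zero => exact ⟨1, one_pos, fun G X m _ _ =>
      .inl ⟨∅, empty_subset X, sparseBlocks_empty G hε.le (zero_mul m)⟩⟩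
  | succ s ihs =>
  induction t with
  | zero => exact ⟨1, one_pos, fun G X m _ _ =>
      .inr ⟨∅, empty_subset X, sparseBlocks_empty Gᶜ hε.le (zero_mul m)⟩⟩
  | succ t iht =>
  obtain ⟨δ₁, hδ₁, h₁⟩ := ihs (t + 1)
  obtain ⟨δ₂, hδ₂, h₂⟩ := iht
  obtain ⟨γ, hγ, hpair⟩ := exists_disjoint_isSparseTo H hε hε1
  refine ⟨γ * min 1 (min δ₁ δ₂), by positivity, fun {V} G X m hG hm => ?_⟩
  rcases Nat.eq_zero_or_pos m with rfl | hm0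
  · exact .inl ⟨∅, empty_subset X, sparseBlocks_empty G hε.le (mul_zero _)⟩
  have hmγ : (m : ℝ) ≤ γ * #X := hm.trans <| by
    gcongr
    exact mul_le_of_le_one_right hγ.le (min_le_left _ _)
  obtain ⟨A, hA, B, hB, hdisj, hAc, hBc, hAB⟩ :=
    hpair G X hG (hmγ.trans' (by exact_mod_cast hm0))
  have hmB : m ≤ #B := by exact_mod_cast hmγ.trans hBc
  have hmA : ∀ δ, 0 < δ → min δ₁ δ₂ ≤ δ → m ≤ δ * #A := fun δ hδ hle =>
    calc (m : ℝ) ≤ γ * min 1 (min δ₁ δ₂) * #X := hm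
      _ ≤ γ * δ * #X := by gcongr; exact (min_le_right _ _).trans hle
      _ = δ * (γ * #X) := by ring
      _ ≤ δ * #A := by gcongr
  rcases hAB with hAB | hAB
  · rcases h₁ G A m hG (hmA δ₁ hδ₁ (min_le_left _ _)) with ⟨S, hSA, hS⟩ | ⟨S, hSA, hS⟩
    · obtain ⟨T, hT, hTblocks⟩ := hS.exists_succ hε.le hSA hdisj hAB hmB
      exact .inl ⟨T, hT.trans (union_subset hA hB), hTblocks⟩
    · exact .inr ⟨S, hSA.trans hA, hS⟩
  · rcases h₂ G A m hG (hmA δ₂ hδ₂ (min_le_right _ _)) with ⟨S, hSA, hS⟩ | ⟨S, hSA, hS⟩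
    · exact .inl ⟨S, hSA.trans hA, hS⟩
    · obtain ⟨T, hT, hTblocks⟩ := hS.exists_succ hε.le hSA hdisj hAB hmB
      exact .inr ⟨T, hT.trans (union_subset hA hB), hTblocks⟩

lemma exists_isSparseTo_of_edgeCount_le {G : SimpleGraph V} {ε : ℝ} (hε : 0 < ε) {S : Finset V}
    (hS : edgeCount G S S ≤ ε * #S ^ 2) :
    ∃ T ⊆ S, #S ≤ 2 * #T ∧ IsSparseTo G (4 * ε) T T := by
  classical
  rcases S.eq_empty_or_nonempty with rfl | hne
  · exact ⟨∅, by simp [IsSparseTo]⟩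
  have hpos : (0 : ℝ) < #S := by exact_mod_cast hne.card_pos
  set T : Finset V := {a ∈ S | (#(neighborsIn G S a) : ℝ) ≤ 2 * ε * #S}
  set R : Finset V := {a ∈ S | ¬ (#(neighborsIn G S a) : ℝ) ≤ 2 * ε * #S}
  have hTR : #T + #R = #S := card_filter_add_card_filter_not _
  have hRS : #R * (2 * ε * #S) ≤ ε * #S ^ 2 := by
    calc #R * (2 * ε * #S) = #R • (2 * ε * #S) := (nsmul_eq_mul _ _).symm
      _ ≤ ∑ a ∈ R, (#(neighborsIn G S a) : ℝ) :=
        card_nsmul_le_sum _ _ _ fun a ha => (not_le.1 (mem_filter.1 ha).2).le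
      _ ≤ edgeCount G S S := by
        exact_mod_cast sum_le_sum_of_subset (filter_subset _ S)
      _ ≤ ε * #S ^ 2 := hS
  have hR2 : 2 * #R ≤ #S := by
    have : (2 * #R : ℝ) ≤ #S := le_of_mul_le_mul_left
      (by linarith : (ε * #S) * (2 * #R) ≤ (ε * #S) * #S) (mul_pos hε hpos)
    exact_mod_cast this
  have hST : #S ≤ 2 * #T := by omega
  refine ⟨T, filter_subset _ _, hST, fun a ha => ?_⟩
  calc (#(neighborsIn G T a) : ℝ) ≤ #(neighborsIn G S a) := by
        gcongr
        exact neighborsIn_mono (filter_subset _ _) a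
    _ ≤ 2 * ε * #S := (mem_filter.1 ha).2
    _ ≤ 2 * ε * (2 * #T) := by gcongr; exact_mod_cast hST
    _ = 4 * ε * #T := by ring

lemma SparseBlocks.exists_isSparseTo {G : SimpleGraph V} {ε : ℝ} {s m : ℕ} {S : Finset V}
    (hS : SparseBlocks G (ε / 8) s m S) (hε : 0 < ε) (hs : 8 ≤ s * ε) :
    ∃ T ⊆ S, m ≤ 2 * #T ∧ IsSparseTo G ε T T := by
  have hs1 : 0 < s := Nat.pos_of_ne_zero fun h => by norm_num [h] at hs
  have hedge : (edgeCount G S S : ℝ) ≤ ε / 4 * #S ^ 2 := by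
    calc (edgeCount G S S : ℝ) ≤ s * m ^ 2 * 1 + ε / 8 * s ^ 2 * m ^ 2 := by simpa using hS.2
      _ ≤ s * m ^ 2 * (s * ε / 8) + ε / 8 * s ^ 2 * m ^ 2 := by gcongr; linarith
      _ = ε / 4 * #S ^ 2 := by rw [hS.1]; push_cast; ring
  obtain ⟨T, hTS, hST, hT⟩ := exists_isSparseTo_of_edgeCount_le (by positivity) hedge
  rw [mul_div_cancel₀ ε four_ne_zero] at hT
  exact ⟨T, hTS, (Nat.le_mul_of_pos_left m hs1).trans (hS.1 ▸ hST), hT⟩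

lemma exists_isSparseTo_self_or_compl {W : Type*} [Finite W] (H : SimpleGraph W) {ε : ℝ}
    (hε : 0 < ε) (hε1 : ε ≤ 1) :
    ∃ δ : ℝ, 0 < δ ∧ ∀ {V : Type*} (G : SimpleGraph V) (X : Finset V), ¬ H ⊴ G → X.Nonempty →
      ∃ S ⊆ X, δ * #X ≤ #S ∧ (IsSparseTo G ε S S ∨ IsSparseTo Gᶜ ε S S) := by
  obtain ⟨s, hs⟩ := exists_nat_ge (8 / ε)
  rw [div_le_iff₀ hε] at hs
  obtain ⟨δ, hδ, h⟩ := exists_sparseBlocks H (ε := ε / 8) (by positivity) (by linarith) s s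
  refine ⟨δ / 4, by positivity, fun {V} G X hG ⟨x, hx⟩ => ?_⟩
  by_cases hbig : 1 ≤ δ * #X
  · have hfloor : δ * #X ≤ 2 * ⌊δ * #X⌋₊ := by
      have h1 : (1 : ℝ) ≤ ⌊δ * #X⌋₊ := by exact_mod_cast (Nat.one_le_floor_iff _).2 hbig
      linarith [Nat.lt_floor_add_one (δ * #X)]
    have hlarge : ∀ T : Finset V, ⌊δ * #X⌋₊ ≤ 2 * #T → δ / 4 * #X ≤ #T := fun T hT => by
      have : (⌊δ * #X⌋₊ : ℝ) ≤ 2 * #T := by exact_mod_cast hT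
      linarith
    rcases h G X ⌊δ * #X⌋₊ hG (Nat.floor_le (by positivity)) with ⟨S, hSX, hS⟩ | ⟨S, hSX, hS⟩
    · obtain ⟨T, hTS, hTc, hT⟩ := hS.exists_isSparseTo hε hs
      exact ⟨T, hTS.trans hSX, hlarge T hTc, .inl hT⟩
    · obtain ⟨T, hTS, hTc, hT⟩ := hS.exists_isSparseTo hε hs
      exact ⟨T, hTS.trans hSX, hlarge T hTc, .inr hT⟩
  · refine ⟨{x}, singleton_subset_iff.2 hx, ?_, .inl fun a ha => ?_⟩
    · rw [card_singleton, Nat.cast_one]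
      linarith
    · have : neighborsIn G {x} a = ∅ := eq_empty_of_forall_notMem fun u hu => by
        obtain ⟨hux, hau⟩ := mem_neighborsIn.1 hu
        exact hau.ne ((mem_singleton.1 ha).trans (mem_singleton.1 hux).symm)
      rw [this, card_empty, Nat.cast_zero]
      positivity

/-! ### Stable sets and critical sets -/

/-- The independence number of the subgraph induced on `X`; its clique number is
`indepNumOn Gᶜ X`. -/
noncomputable def indepNumOn (G : SimpleGraph V) (X : Finset V) : ℕ :=
  (G.induce (X : Set V)).indepNum

lemma card_le_indepNumOn {G : SimpleGraph V} {T X : Finset V} (hT : G.IsIndepSet T)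
    (hTX : T ⊆ X) : #T ≤ indepNumOn G X := by
  classical
  have hT' : (G.induce (X : Set V)).IsIndepSet (T.subtype (· ∈ X) : Finset (X : Set V)) := by
    intro u hu v hv huv
    exact hT (mem_subtype.1 hu) (mem_subtype.1 hv) (Subtype.coe_injective.ne huv)
  rw [← filter_eq_self.2 hTX, ← card_subtype]
  exact hT'.card_le_indepNum

lemma exists_isIndepSet_card_eq_indepNumOn (G : SimpleGraph V) (X : Finset V) :
    ∃ T ⊆ X, G.IsIndepSet T ∧ #T = indepNumOn G X := by
  obtain ⟨T, hT⟩ := (G.induce (X : Set V)).exists_isNIndepSet_indepNum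
  refine ⟨T.map (.subtype _), fun u hu => ?_, fun u hu v hv huv => ?_, ?_⟩
  · obtain ⟨u, -, rfl⟩ := mem_map.1 hu
    exact u.2
  · obtain ⟨u, huT, rfl⟩ := mem_map.1 hu
    obtain ⟨v, hvT, rfl⟩ := mem_map.1 hv
    exact hT.isIndepSet huT hvT (ne_of_apply_ne _ huv)
  · rw [card_map, hT.card_eq, indepNumOn]

lemma indepNumOn_mono (G : SimpleGraph V) {X Y : Finset V} (h : X ⊆ Y) :
    indepNumOn G X ≤ indepNumOn G Y := by
  obtain ⟨T, hTX, hT, hc⟩ := exists_isIndepSet_card_eq_indepNumOn G X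
  exact hc ▸ card_le_indepNumOn hT (hTX.trans h)

lemma indepNumOn_pos (G : SimpleGraph V) {X : Finset V} (h : X.Nonempty) : 0 < indepNumOn G X := by
  obtain ⟨x, hx⟩ := h
  have hx1 : G.IsIndepSet ({x} : Finset V) := by simp
  exact card_le_indepNumOn hx1 (singleton_subset_iff.2 hx)

lemma indepNumOn_le_indepNum [Finite V] (G : SimpleGraph V) (X : Finset V) :
    indepNumOn G X ≤ G.indepNum := by
  obtain ⟨T, -, hT, hc⟩ := exists_isIndepSet_card_eq_indepNumOn G X
  exact hc ▸ hT.card_le_indepNum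

lemma isIndepSet_union [DecidableEq V] {G : SimpleGraph V} {S T : Finset V} (hS : G.IsIndepSet S)
    (hT : G.IsIndepSet T) (h : Gᶜ.IsCompleteBetween S T) :
    G.IsIndepSet (S ∪ T : Finset V) := by
  rw [coe_union, IsIndepSet, Set.pairwise_union]
  exact ⟨hS, hT, fun u hu v hv _ => ⟨(h hu hv).2, (h hu hv).symm.2⟩⟩

lemma indepNumOn_add_le [DecidableEq V] {G : SimpleGraph V} {A B : Finset V}
    (h : Gᶜ.IsCompleteBetween A B) :
    indepNumOn G A + indepNumOn G B ≤ indepNumOn G (A ∪ B) := by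
  obtain ⟨S, hSA, hS, hSc⟩ := exists_isIndepSet_card_eq_indepNumOn G A
  obtain ⟨T, hTB, hT, hTc⟩ := exists_isIndepSet_card_eq_indepNumOn G B
  rw [← hSc, ← hTc, ← card_union_of_disjoint ((disjoint_coe.1 h.disjoint).mono hSA hTB)]
  exact card_le_indepNumOn (isIndepSet_union hS hT fun a ha b hb => h (hSA ha) (hTB hb))
    (union_subset_union hSA hTB)

lemma sum_indepNumOn_le {ι : Type*} {G : SimpleGraph V} {I : Finset ι} {Y : ι → Finset V}
    {X : Finset V} (hX : ∀ i ∈ I, Y i ⊆ X)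
    (hY : (I : Set ι).Pairwise fun i j => Gᶜ.IsCompleteBetween (Y i) (Y j)) :
    ∑ i ∈ I, indepNumOn G (Y i) ≤ indepNumOn G X := by
  classical
  refine le_trans ?_ (indepNumOn_mono G (biUnion_subset.2 hX))
  clear hX
  induction I using Finset.induction_on with
  | empty => simp
  | insert i I hi ih =>
    rw [sum_insert hi, biUnion_insert]
    have hcross : Gᶜ.IsCompleteBetween (Y i) (I.biUnion Y : Finset V) := by
      intro a ha b hb
      obtain ⟨j, hj, hb⟩ := mem_biUnion.1 hb
      exact hY (mem_insert_self i I) (mem_insert_of_mem hj) (fun h => hi (h ▸ hj)) ha hb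
    calc _ ≤ indepNumOn G (Y i) + indepNumOn G (I.biUnion Y) :=
          Nat.add_le_add_left (ih (hY.mono (coe_subset.2 (subset_insert i I)))) _
      _ ≤ _ := indepNumOn_add_le hcross

/-- `X` is a minimal set whose size exceeds the `D`-th power of the product of its independence
number and its clique number. -/
structure IsCritical (G : SimpleGraph V) (D : ℕ) (X : Finset V) : Prop where
  card_le : ∀ Y ⊂ X, #Y ≤ (indepNumOn G Y * indepNumOn Gᶜ Y) ^ D
  lt_card : (indepNumOn G X * indepNumOn Gᶜ X) ^ D < #X

lemma IsCritical.compl {G : SimpleGraph V} {D : ℕ} {X : Finset V} (h : IsCritical G D X) :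
    IsCritical Gᶜ D X where
  card_le Y hY := by simpa [mul_comm] using h.card_le Y hY
  lt_card := by simpa [mul_comm] using h.lt_card

lemma IsCritical.indepNumOn_lt {G : SimpleGraph V} {D : ℕ} {X Y : Finset V}
    (h : IsCritical G D X) (hYX : Y ⊂ X) {k : ℕ} (hk : #X ≤ #Y * k ^ D) :
    indepNumOn G X < indepNumOn G Y * k := by
  have hpow : (indepNumOn G X * indepNumOn Gᶜ X) ^ D <
      (indepNumOn G Y * k * indepNumOn Gᶜ X) ^ D := by
    calc (indepNumOn G X * indepNumOn Gᶜ X) ^ D < #Y * k ^ D := h.lt_card.trans_le hk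
      _ ≤ (indepNumOn G Y * indepNumOn Gᶜ Y) ^ D * k ^ D := by gcongr; exact h.card_le Y hYX
      _ = (indepNumOn G Y * k * indepNumOn Gᶜ Y) ^ D := by rw [← mul_pow]; ring
      _ ≤ (indepNumOn G Y * k * indepNumOn Gᶜ X) ^ D := by
        gcongr
        exact indepNumOn_mono Gᶜ hYX.1
  exact lt_of_mul_lt_mul_right' (lt_of_pow_lt_pow_left' D hpow)

lemma IsCritical.exists_card_mul_pow_lt {ι : Type*} {G : SimpleGraph V} {D : ℕ} {X : Finset V}
    (h : IsCritical G D X) {I : Finset ι} (hI : I.Nonempty) {Y : ι → Finset V}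
    (hX : ∀ i ∈ I, Y i ⊂ X)
    (hY : (I : Set ι).Pairwise fun i j => Gᶜ.IsCompleteBetween (Y i) (Y j)) :
    ∃ i ∈ I, #(Y i) * #I ^ D < #X := by
  by_contra! hlarge
  have hlt : ∀ i ∈ I, indepNumOn G X < indepNumOn G (Y i) * #I := fun i hi =>
    h.indepNumOn_lt (hX i hi) (hlarge i hi)
  have hsum := sum_lt_sum_of_nonempty hI hlt
  rw [sum_const, smul_eq_mul, ← sum_mul, mul_comm] at hsum
  exact (lt_of_mul_lt_mul_right' hsum).not_ge (sum_indepNumOn_le (fun i hi => (hX i hi).1) hY)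

lemma IsCritical.exists_card_mul_pow_lt_of_card_le {ι : Type*} {G : SimpleGraph V} {d e M : ℕ}
    {X : Finset V} (h : IsCritical G (d + e) X) (hM : #X ≤ 2 ^ d * M) {I : Finset ι}
    (hI : 2 ≤ #I) {Y : ι → Finset V} (hX : ∀ i ∈ I, Y i ⊂ X)
    (hY : (I : Set ι).Pairwise fun i j => Gᶜ.IsCompleteBetween (Y i) (Y j)) :
    ∃ i ∈ I, #(Y i) * #I ^ e < M := by
  obtain ⟨i, hi, hlt⟩ := h.exists_card_mul_pow_lt (card_pos.1 (by omega)) hX hY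
  refine ⟨i, hi, lt_of_mul_lt_mul_left' (a := #I ^ d) ?_⟩
  calc #I ^ d * (#(Y i) * #I ^ e) = #(Y i) * #I ^ (d + e) := by ring
    _ < #X := hlt
    _ ≤ 2 ^ d * M := hM
    _ ≤ #I ^ d * M := by gcongr

/-! ### Private neighbours -/

open Classical in
/-- The vertices of `U` with a neighbour in `T`. -/
noncomputable def coveredBy (G : SimpleGraph V) (T U : Finset V) : Finset V :=
  {u ∈ U | ∃ a ∈ T, G.Adj a u}

lemma mem_coveredBy {G : SimpleGraph V} {T U : Finset V} {u : V} :
    u ∈ coveredBy G T U ↔ u ∈ U ∧ ∃ a ∈ T, G.Adj a u := by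
  simp [coveredBy]

open Classical in
/-- The vertices of `U` whose unique neighbour in `I` is `a` (for `a ∈ I`). -/
noncomputable def privateNeighbors (G : SimpleGraph V) (I U : Finset V) (a : V) : Finset V :=
  {u ∈ U | ∀ b ∈ I, G.Adj b u ↔ b = a}

lemma mem_privateNeighbors {G : SimpleGraph V} {I U : Finset V} {a u : V} :
    u ∈ privateNeighbors G I U a ↔ u ∈ U ∧ ∀ b ∈ I, G.Adj b u ↔ b = a := by
  simp [privateNeighbors]

lemma coveredBy_subset (G : SimpleGraph V) (T U : Finset V) : coveredBy G T U ⊆ U :=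
  fun _ hu => (mem_coveredBy.1 hu).1

lemma card_coveredBy_le {G : SimpleGraph V} {T U : Finset V} {Δ : ℕ}
    (h : ∀ a ∈ T, #(neighborsIn G U a) ≤ Δ) : #(coveredBy G T U) ≤ #T * Δ := by
  classical
  refine (card_le_card fun u hu => ?_).trans (card_biUnion_le_card_mul T (neighborsIn G U) Δ h)
  obtain ⟨huU, a, haT, hau⟩ := mem_coveredBy.1 hu
  exact mem_biUnion.2 ⟨a, haT, mem_neighborsIn.2 ⟨huU, hau⟩⟩

lemma privateNeighbors_subset (G : SimpleGraph V) (I U : Finset V) (a : V) :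
    privateNeighbors G I U a ⊆ U :=
  fun _ hu => (mem_privateNeighbors.1 hu).1

lemma privateNeighbors_mono (G : SimpleGraph V) (I : Finset V) {U U' : Finset V} (h : U ⊆ U')
    (a : V) : privateNeighbors G I U a ⊆ privateNeighbors G I U' a := fun _ hu =>
  mem_privateNeighbors.2 ⟨h (mem_privateNeighbors.1 hu).1, (mem_privateNeighbors.1 hu).2⟩

lemma adj_of_mem_privateNeighbors {G : SimpleGraph V} {I U : Finset V} {a u : V}
    (hu : u ∈ privateNeighbors G I U a) (ha : a ∈ I) : G.Adj a u :=
  ((mem_privateNeighbors.1 hu).2 a ha).2 rfl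

lemma not_adj_of_mem_privateNeighbors {G : SimpleGraph V} {I U : Finset V} {a b u : V}
    (hu : u ∈ privateNeighbors G I U a) (hb : b ∈ I) (hba : b ≠ a) : ¬ G.Adj b u :=
  fun hbu => hba (((mem_privateNeighbors.1 hu).2 b hb).1 hbu)

lemma coveredBy_subset_union_privateNeighbors [DecidableEq V] (G : SimpleGraph V)
    (I U : Finset V) (a : V) :
    coveredBy G I U ⊆ coveredBy G (I.erase a) U ∪ privateNeighbors G I U a := by
  intro u hu
  obtain ⟨huU, b, hbI, hbu⟩ := mem_coveredBy.1 hu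
  simp only [mem_union, mem_coveredBy, mem_privateNeighbors, mem_erase]
  by_cases h : ∃ c ∈ I, c ≠ a ∧ G.Adj c u
  · obtain ⟨c, hcI, hca, hcu⟩ := h
    exact .inl ⟨huU, c, ⟨hca, hcI⟩, hcu⟩
  · push Not at h
    have hba : b = a := by_contra fun hba => h b hbI hba hbu
    exact .inr ⟨huU, fun c hcI => ⟨fun hcu => by_contra fun hca => h c hcI hca hcu,
      fun hca => by rwa [hca, ← hba]⟩⟩

lemma coveredBy_insert [DecidableEq V] (G : SimpleGraph V) (I U : Finset V) (a : V) :
    coveredBy G (insert a I) U =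
      coveredBy G I U ∪ neighborsIn G (U \ coveredBy G I U) a := by
  ext u
  simp only [mem_union, mem_coveredBy, mem_neighborsIn, mem_sdiff, exists_mem_insert]
  grind

lemma coveredBy_singleton (G : SimpleGraph V) (U : Finset V) (a : V) :
    coveredBy G {a} U = neighborsIn G U a := by
  ext u
  simp [mem_coveredBy, mem_neighborsIn]

lemma isCompleteBetween_compl_sdiff_coveredBy [DecidableEq V] (G : SimpleGraph V)
    (T U : Finset V) : Gᶜ.IsCompleteBetween T (U \ (T ∪ coveredBy G T U) : Finset V) := by
  intro a ha b hb
  obtain ⟨hbU, hbT⟩ := mem_sdiff.1 hb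
  rw [mem_union, not_or] at hbT
  exact ⟨fun hab => hbT.1 (hab ▸ ha), fun hab => hbT.2 (mem_coveredBy.2 ⟨hbU, a, ha, hab⟩)⟩

lemma exists_large_privateNeighbors [DecidableEq V] (G : SimpleGraph V) (T U : Finset V) (Δ : ℕ) :
    ∃ I ⊆ T, (∀ a ∈ I, Δ ≤ 2 * #(privateNeighbors G I U a)) ∧
      ∀ a ∈ T, 2 * #(neighborsIn G (U \ coveredBy G I U) a) ≤ Δ := by
  obtain ⟨I, hIT, hmax⟩ := exists_max_image T.powerset
    (fun I => 2 * (#(coveredBy G I U) : ℤ) - Δ * #I) ⟨∅, empty_mem_powerset T⟩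
  rw [mem_powerset] at hIT
  refine ⟨I, hIT, fun a ha => ?_, fun a ha => ?_⟩
  · have hle := hmax (I.erase a) (mem_powerset.2 ((erase_subset a I).trans hIT))
    have hcov := (card_le_card (coveredBy_subset_union_privateNeighbors G I U a)).trans
      (card_union_le _ _)
    rw [cast_card_erase_of_mem ha] at hle
    zify at hcov ⊢
    linarith
  · have hdisj : Disjoint (coveredBy G I U) (neighborsIn G (U \ coveredBy G I U) a) :=
      disjoint_sdiff.mono_right (neighborsIn_subset G _ a)
    have hle := hmax (insert a I) (mem_powerset.2 (insert_subset ha hIT))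
    have hcard : #(insert a I) ≤ #I + 1 := card_insert_le a I
    rw [coveredBy_insert, card_union_of_disjoint hdisj] at hle
    zify at hcard ⊢
    push_cast at hle
    nlinarith

lemma mul_le_mul_sqrt_of_sq_mul_le {i m δ : ℝ} (h : i ^ 2 * δ ≤ 2 * m) (hm : 0 ≤ m) (hδ : 0 ≤ δ) :
    i * δ ≤ 10 / 7 * √(m * δ) := by
  refine abs_le_of_sq_le_sq' ?_ (by positivity) |>.2
  rw [mul_pow, mul_pow, Real.sq_sqrt (by positivity)]
  nlinarith [mul_nonneg hm hδ]

lemma sqrt_mul_half_le {m δ : ℝ} (hm : 0 ≤ m) (hδ : 0 ≤ δ) :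
    √(m * (δ / 2)) ≤ 5 / 7 * √(m * δ) := by
  refine Real.sqrt_le_iff.2 ⟨by positivity, ?_⟩
  rw [mul_pow, Real.sq_sqrt (by positivity)]
  nlinarith [mul_nonneg hm hδ]

/-- Removing the vertices covered by `I` halves `Δ`, so the square roots form a geometric series. -/
lemma card_le_sqrt_or_exists_privateNeighbors (G : SimpleGraph V) (M : ℕ) {T : Finset V} {Δ : ℕ}
    {U : Finset V} (hU : ∀ u ∈ U, ∃ a ∈ T, G.Adj a u) (hΔ : ∀ a ∈ T, #(neighborsIn G U a) ≤ Δ) :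
    #U ≤ 5 * √(M * Δ) ∨
      ∃ I ⊆ T, I.Nonempty ∧ ∀ a ∈ I, M ≤ #(privateNeighbors G I U a) * #I ^ 2 := by
  classical
  induction Δ using Nat.strong_induction_on generalizing U with
  | _ Δ ih =>
  rcases Nat.eq_zero_or_pos Δ with rfl | hΔ0
  · have hU0 : U = ∅ := eq_empty_of_forall_notMem fun u hu => by
      obtain ⟨a, haT, hau⟩ := hU u hu
      have : u ∈ neighborsIn G U a := mem_neighborsIn.2 ⟨hu, hau⟩
      simp_all
    simp [hU0]
  by_contra! hcon
  obtain ⟨hlarge, hnot⟩ := hcon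
  obtain ⟨I, hIT, hpriv, hrest⟩ := exists_large_privateNeighbors G T U Δ
  have hcov : #(coveredBy G I U) ≤ 10 / 7 * √(M * Δ) := by
    have hIM : #I ^ 2 * Δ ≤ 2 * M := by
      rcases I.eq_empty_or_nonempty with rfl | hI
      · simp
      obtain ⟨a, ha, hlt⟩ := hnot I hIT hI
      calc #I ^ 2 * Δ ≤ #I ^ 2 * (2 * #(privateNeighbors G I U a)) := by gcongr; exact hpriv a ha
        _ = 2 * (#(privateNeighbors G I U a) * #I ^ 2) := by ring
        _ ≤ 2 * M := by gcongr
    calc (#(coveredBy G I U) : ℝ) ≤ #I * Δ := by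
          exact_mod_cast card_coveredBy_le fun a ha => hΔ a (hIT ha)
      _ ≤ 10 / 7 * √(M * Δ) := mul_le_mul_sqrt_of_sq_mul_le (by exact_mod_cast hIM)
        M.cast_nonneg Δ.cast_nonneg
  have hrestle : #(U \ coveredBy G I U) ≤ 25 / 7 * √(M * Δ) := by
    rcases ih (Δ / 2) (by omega) (U := U \ coveredBy G I U)
      (fun u hu => hU u (mem_sdiff.1 hu).1) (fun a ha => by have := hrest a ha; omega) with
      hle | ⟨J, hJT, hJ, hprivJ⟩
    · have hhalf : √(M * (Δ / 2 : ℕ)) ≤ 5 / 7 * √(M * Δ) :=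
        (Real.sqrt_le_sqrt (by gcongr; exact_mod_cast Nat.cast_div_le)).trans
          (sqrt_mul_half_le M.cast_nonneg Δ.cast_nonneg)
      linarith
    · obtain ⟨a, ha, hlt⟩ := hnot J hJT hJ
      refine absurd ((hprivJ a ha).trans ?_) hlt.not_ge
      gcongr
      exact privateNeighbors_mono G J sdiff_subset a
  have hsplit : (#U : ℝ) = #(U \ coveredBy G I U) + #(coveredBy G I U) := by
    exact_mod_cast (card_sdiff_add_card_eq_card (coveredBy_subset G I U)).symm
  linarith

/-! ### Connected and anticomplete sets -/

lemma exists_disjUnion_isCompleteBetween_compl [DecidableEq V] {G : SimpleGraph V} {Y : Finset V}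
    (hY : ¬ (G.induce (Y : Set V)).Preconnected) :
    ∃ A B, A.Nonempty ∧ B.Nonempty ∧ A ∪ B = Y ∧ Gᶜ.IsCompleteBetween A B := by
  classical
  simp only [Preconnected, not_forall] at hY
  obtain ⟨u, v, huv⟩ := hY
  set A : Finset V := {y ∈ Y | ∃ hy : y ∈ (Y : Set V), (G.induce (Y : Set V)).Reachable u ⟨y, hy⟩}
  refine ⟨A, Y \ A, ⟨u, ?_⟩, ⟨v, ?_⟩, union_sdiff_of_subset (filter_subset _ _), ?_⟩
  · exact mem_filter.2 ⟨u.2, u.2, .rfl⟩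
  · exact mem_sdiff.2 ⟨v.2, fun h => huv (mem_filter.1 h).2.2⟩
  · intro a ha b hb
    obtain ⟨-, haY, hua⟩ := mem_filter.1 ha
    obtain ⟨hbY, hbA⟩ := mem_sdiff.1 hb
    refine (G.compl_adj a b).2 ⟨fun hab => hbA (hab ▸ ha), fun hab => hbA ?_⟩
    have : (G.induce (Y : Set V)).Adj ⟨a, haY⟩ ⟨b, hbY⟩ := hab
    exact mem_filter.2 ⟨hbY, hbY, hua.trans this.reachable⟩

lemma exists_isCompleteBetween_compl_sdiff [DecidableEq V] (G : SimpleGraph V) {m : ℝ}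
    {B : Finset V} (hB : m ≤ #B) :
    ∃ Y ⊆ B, m ≤ #Y ∧ Gᶜ.IsCompleteBetween Y (B \ Y : Finset V) ∧
      ((G.induce (Y : Set V)).Preconnected ∨ #Y ≤ 2 * m) := by
  let P (Y : Finset V) : Prop := Y ⊆ B ∧ m ≤ #Y ∧ Gᶜ.IsCompleteBetween Y (B \ Y : Finset V)
  have hPB : P B := ⟨Subset.rfl, hB, fun a _ b hb => by simp at hb⟩
  obtain ⟨Y, -, hY⟩ := exists_minimal_le_of_wellFoundedLT P B hPB
  obtain ⟨⟨hYB, hYm, hYc⟩, hmin⟩ := minimal_iff_forall_lt.1 hY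
  refine ⟨Y, hYB, hYm, hYc, or_iff_not_imp_left.2 fun hconn => ?_⟩
  have hsmall : ∀ A ⊂ Y, Gᶜ.IsCompleteBetween A (Y \ A : Finset V) → (#A : ℝ) < m := by
    intro A hAY hA
    by_contra! hAm
    refine hmin hAY ⟨hAY.1.trans hYB, hAm, fun a ha b hb => ?_⟩
    obtain ⟨hbB, hbA⟩ := mem_sdiff.1 hb
    by_cases hbY : b ∈ Y
    · exact hA ha (mem_sdiff.2 ⟨hbY, hbA⟩)
    · exact hYc (hAY.1 ha) (mem_sdiff.2 ⟨hbB, hbY⟩)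
  obtain ⟨A, C, ⟨a, ha⟩, ⟨c, hc⟩, rfl, hAC⟩ := exists_disjUnion_isCompleteBetween_compl hconn
  have hdisj : Disjoint A C := disjoint_coe.1 hAC.disjoint
  have hAm : (#A : ℝ) < m := by
    refine hsmall A (ssubset_iff_of_subset subset_union_left |>.2
      ⟨c, mem_union_right A hc, disjoint_right.1 hdisj hc⟩) ?_
    rwa [union_sdiff_cancel_left hdisj]
  have hCm : (#C : ℝ) < m := by
    refine hsmall C (ssubset_iff_of_subset subset_union_right |>.2
      ⟨a, mem_union_left C ha, disjoint_left.1 hdisj ha⟩) ?_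
    rw [union_sdiff_cancel_right hdisj]
    exact hAC.symm
  have hAC' : (#(A ∪ C) : ℝ) ≤ #A + #C := by exact_mod_cast card_union_le A C
  linarith

lemma exists_preconnected_or_isCompleteBetween_compl (G : SimpleGraph V) {m : ℝ} (hm : 0 ≤ m)
    (k : ℕ) {B : Finset V} (hB : 2 * m * k ≤ #B) :
    (∃ C ⊆ B, m ≤ #C ∧ (G.induce (C : Set V)).Preconnected) ∨
      ∃ Y : ℕ → Finset V, (∀ i ∈ range k, Y i ⊆ B ∧ m ≤ #(Y i)) ∧
        (range k : Set ℕ).Pairwise fun i j => Gᶜ.IsCompleteBetween (Y i) (Y j) := by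
  classical
  induction k generalizing B with
  | zero => exact .inr ⟨fun _ => ∅, by simp⟩
  | succ k ih =>
    push_cast at hB
    have hmk : 0 ≤ m * k := by positivity
    obtain ⟨Z, hZB, hZm, hZ, hconn | hsmall⟩ :=
      exists_isCompleteBetween_compl_sdiff G (m := m) (B := B) (by linarith)
    · exact .inl ⟨Z, hZB, hZm, hconn⟩
    have hcard : (#(B \ Z) : ℝ) + #Z = #B := by exact_mod_cast card_sdiff_add_card_eq_card hZB
    rcases ih (B := B \ Z) (by linarith) with ⟨C, hC, hCm, hconn⟩ | ⟨Y, hYB, hY⟩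
    · exact .inl ⟨C, hC.trans sdiff_subset, hCm, hconn⟩
    have hZY : ∀ i ∈ range k, Gᶜ.IsCompleteBetween Z (Y i) := fun i hi z hz y hy =>
      hZ hz ((hYB i hi).1 hy)
    have hne : ∀ i ∈ range k, i ≠ k := fun i hi => (mem_range.1 hi).ne
    refine .inr ⟨Function.update Y k Z, ?_, ?_⟩
    · rw [range_add_one, forall_mem_insert]
      refine ⟨by simpa using ⟨hZB, hZm⟩, fun i hi => ?_⟩
      rw [Function.update_of_ne (hne i hi)]
      exact ⟨(hYB i hi).1.trans sdiff_subset, (hYB i hi).2⟩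
    · rw [range_add_one, coe_insert, Set.pairwise_insert]
      refine ⟨fun i hi j hj hij => ?_, fun i hi _ => ?_⟩
      · simpa [Function.update_of_ne (hne i hi), Function.update_of_ne (hne j hj)] using
          hY hi hj hij
      · simpa [Function.update_of_ne (hne i hi)] using ⟨hZY i hi, (hZY i hi).symm⟩

lemma IsCritical.exists_preconnected_subset {G : SimpleGraph V} {d e k M : ℕ} {B X : Finset V}
    (h : IsCritical G (d + e) X) (he : 4 ≤ e) (hM : #X ≤ 2 ^ d * M) (hk : 2 ≤ k) (hBX : B ⊂ X)
    (hB : M ≤ #B * k ^ 2) :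
    ∃ C ⊆ B, #B ≤ 2 * k * #C ∧ (G.induce (C : Set V)).Preconnected := by
  have hk0 : (0 : ℝ) < 2 * k := by positivity
  have hlarge : ∀ C : Finset V, (#B / (2 * k) : ℝ) ≤ #C → #B ≤ 2 * k * #C := fun C hC => by
    rw [div_le_iff₀' hk0] at hC
    exact_mod_cast hC
  rcases exists_preconnected_or_isCompleteBetween_compl G (m := #B / (2 * k)) (by positivity) k
    (B := B) (le_of_eq (by field_simp)) with ⟨C, hCB, hC, hconn⟩ | ⟨Y, hYB, hY⟩
  · exact ⟨C, hCB, hlarge C hC, hconn⟩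
  · obtain ⟨i, hi, hlt⟩ := h.exists_card_mul_pow_lt_of_card_le hM (by simpa using hk)
      (fun i hi => (hYB i hi).1.trans_ssubset hBX) hY
    rw [card_range] at hlt
    refine absurd ?_ hlt.not_ge
    calc M ≤ #B * k ^ 2 := hB
      _ ≤ 2 * k * #(Y i) * k ^ 2 := by gcongr; exact hlarge _ (hYB i hi).2
      _ = #(Y i) * (2 * k ^ 3) := by ring
      _ ≤ #(Y i) * k ^ e := by
        gcongr
        calc 2 * k ^ 3 ≤ k * k ^ 3 := by gcongr
          _ = k ^ 4 := by ring
          _ ≤ k ^ e := Nat.pow_le_pow_right (by omega) he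

lemma card_le_indepNumOn_add_sq_of_cliqueFreeOn {J : SimpleGraph V} {I : Finset V}
    (h : J.CliqueFreeOn I 3) : #I ≤ indepNumOn J I + indepNumOn J I ^ 2 := by
  classical
  obtain ⟨T, hTI, hT, hTc⟩ := exists_isIndepSet_card_eq_indepNumOn J I
  have hcov : I ⊆ T ∪ coveredBy J T I := by
    intro u hu
    by_contra! hcon
    simp only [mem_union, mem_coveredBy, not_or, not_and, not_exists] at hcon
    have hins : J.IsIndepSet (insert u T : Finset V) := by
      rw [coe_insert, IsIndepSet, Set.pairwise_insert]
      exact ⟨hT, fun a ha _ => ⟨fun hua => hcon.2 hu a ha hua.symm, hcon.2 hu a ha⟩⟩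
    have := card_le_indepNumOn hins (insert_subset hu hTI)
    rw [card_insert_of_notMem hcon.1] at this
    omega
  have hnbr : ∀ a ∈ T, #(neighborsIn J I a) ≤ indepNumOn J I := fun a ha => by
    refine card_le_indepNumOn (fun b hb c hc _ hbc => ?_) (neighborsIn_subset J I a)
    obtain ⟨hbI, hab⟩ := mem_neighborsIn.1 hb
    obtain ⟨hcI, hac⟩ := mem_neighborsIn.1 hc
    refine h (t := {a, b, c}) ?_ (is3Clique_triple_iff.2 ⟨hab, hac, hbc⟩)
    simp [Set.insert_subset_iff, hTI ha, hbI, hcI]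
  calc #I ≤ #T + #(coveredBy J T I) := (card_le_card hcov).trans (card_union_le _ _)
    _ ≤ #T + #T * indepNumOn J I := Nat.add_le_add_left (card_coveredBy_le hnbr) _
    _ = indepNumOn J I + indepNumOn J I ^ 2 := by rw [hTc, sq]

/-! ### Combs below a common neighbour in a `Ĉ₅`-free graph -/

instance : DecidableRel hatC5.Adj := fun i j =>
  inferInstanceAs (Decidable ((fromEdgeSet
    {s(0, 1), s(1, 2), s(2, 3), s(3, 4), s(4, 0), s(5, 0), s(5, 1)} :
      SimpleGraph (Fin 6)).Adj i j))

lemma eq_of_forall_hatC5_adj_iff : ∀ i j, (∀ l, hatC5.Adj i l ↔ hatC5.Adj j l) → i = j := by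
  decide

lemma hatC5_isIndContained {G : SimpleGraph V} {a b c d e w : V}
    (hab : G.Adj a b) (hbc : G.Adj b c) (hcd : G.Adj c d) (hde : G.Adj d e) (hea : G.Adj e a)
    (hwa : G.Adj w a) (hwb : G.Adj w b) (hac : ¬ G.Adj a c) (had : ¬ G.Adj a d)
    (hbd : ¬ G.Adj b d) (hbe : ¬ G.Adj b e) (hce : ¬ G.Adj c e) (hwc : ¬ G.Adj w c)
    (hwd : ¬ G.Adj w d) (hwe : ¬ G.Adj w e) : hatC5 ⊴ G := by
  obtain ⟨f, hf⟩ : ∃ f : Fin 6 → V, ∀ i j, G.Adj (f i) (f j) ↔ hatC5.Adj i j := by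
    refine ⟨![a, b, c, d, e, w], fun i j => ?_⟩
    fin_cases i <;> fin_cases j <;>
      simp [hatC5, hab, hbc, hcd, hde, hea, hwa, hwb, hac, had, hbd, hbe, hce, hwc, hwd, hwe,
        hab.symm, hbc.symm, hcd.symm, hde.symm, hea.symm, hwa.symm, hwb.symm,
        mt G.adj_symm hac, mt G.adj_symm had, mt G.adj_symm hbd, mt G.adj_symm hbe,
        mt G.adj_symm hce, mt G.adj_symm hwc, mt G.adj_symm hwd, mt G.adj_symm hwe]
  have hinj : Function.Injective f := fun i j hij =>
    eq_of_forall_hatC5_adj_iff i j fun l => by rw [← hf, ← hf, hij]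
  exact ⟨⟨⟨f, hinj⟩, hf _ _⟩⟩

lemma exists_adj_of_preconnected_induce {G : SimpleGraph V} {C : Finset V}
    (hC : (G.induce (C : Set V)).Preconnected) {b u w : V} (hu : u ∈ C) (hw : w ∈ C)
    (hbu : G.Adj b u) (hbw : ¬ G.Adj b w) :
    ∃ p ∈ C, ∃ q ∈ C, G.Adj p q ∧ G.Adj b p ∧ ¬ G.Adj b q := by
  obtain ⟨W⟩ := hC ⟨u, hu⟩ ⟨w, hw⟩
  obtain ⟨x, -, hx, hx'⟩ := W.exists_boundary_dart {y | G.Adj b y} hbu hbw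
  exact ⟨x.fst, x.fst.2, x.snd, x.snd.2, x.adj, hx, hx'⟩

/-- `v` is adjacent to all of the stable set `I` and to none of `U`. -/
structure IsApex (G : SimpleGraph V) (v : V) (I U : Finset V) : Prop where
  isIndepSet : G.IsIndepSet I
  adj : ∀ a ∈ I, G.Adj v a
  compl_adj : ∀ u ∈ U, Gᶜ.Adj v u

section IsApex

variable {G : SimpleGraph V} {v : V} {I U : Finset V}

lemma IsApex.not_adj (h : IsApex G v I U) {u : V} (hu : u ∈ U) : ¬ G.Adj u v := fun huv =>
  (h.compl_adj u hu).2 huv.symm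

lemma IsApex.adj_of_adj (h : IsApex G v I U) (hG : ¬ hatC5 ⊴ G) {a a' b u w : V} (ha : a ∈ I)
    (ha' : a' ∈ I) (haa' : a ≠ a') {C : Finset V} (hCU : C ⊆ privateNeighbors G I U a)
    (hC : (G.induce (C : Set V)).Preconnected) (hb : b ∈ privateNeighbors G I U a') (hu : u ∈ C)
    (hw : w ∈ C) (hbu : G.Adj b u) : G.Adj b w := by
  by_contra hbw
  obtain ⟨p, hp, q, hq, hpq, hbp, hbq⟩ := exists_adj_of_preconnected_induce hC hu hw hbu hbw
  have hpa := hCU hp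
  have hqa := hCU hq
  exact hG <| hatC5_isIndContained (adj_of_mem_privateNeighbors hpa ha) hbp.symm
    (adj_of_mem_privateNeighbors hb ha').symm (h.adj a' ha').symm (h.adj a ha)
    (adj_of_mem_privateNeighbors hqa ha).symm hpq.symm
    (not_adj_of_mem_privateNeighbors hb ha haa') (h.isIndepSet ha ha' haa')
    (mt G.adj_symm (not_adj_of_mem_privateNeighbors hpa ha' haa'.symm))
    (h.not_adj (privateNeighbors_subset _ _ _ _ hpa))
    (h.not_adj (privateNeighbors_subset _ _ _ _ hb)) (mt G.adj_symm hbq)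
    (mt G.adj_symm (not_adj_of_mem_privateNeighbors hqa ha' haa'.symm))
    (h.not_adj (privateNeighbors_subset _ _ _ _ hqa))

lemma IsApex.isCompleteBetween (h : IsApex G v I U) (hG : ¬ hatC5 ⊴ G) {a a' : V} (ha : a ∈ I)
    (ha' : a' ∈ I) (haa' : a ≠ a') {C C' : Finset V} (hC : C ⊆ privateNeighbors G I U a)
    (hC' : C' ⊆ privateNeighbors G I U a') (hconn : (G.induce (C : Set V)).Preconnected)
    (hconn' : (G.induce (C' : Set V)).Preconnected) (hCC' : ¬ Gᶜ.IsCompleteBetween C C') :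
    G.IsCompleteBetween C C' := by
  simp only [IsCompleteBetween, not_forall] at hCC'
  obtain ⟨b, hb, b', hb', hbb'⟩ := hCC'
  have hne : b ≠ b' := by
    rintro rfl
    exact not_adj_of_mem_privateNeighbors (hC hb) ha' haa'.symm
      (adj_of_mem_privateNeighbors (hC' hb') ha')
  have hadj : G.Adj b b' := by simpa [hne] using hbb'
  intro c hc c' hc'
  have hbc' := h.adj_of_adj hG ha' ha haa'.symm hC' hconn' (hC hb) hb' hc' hadj
  exact (h.adj_of_adj hG ha ha' haa' hC hconn (hC' hc') hb hc hbc'.symm).symm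

lemma IsApex.not_adj_of_adj_of_adj (h : IsApex G v I U) (hG : ¬ hatC5 ⊴ G)
    {a₁ a₂ a₃ b₁ b₂ b₃ : V} (ha₁ : a₁ ∈ I) (ha₂ : a₂ ∈ I) (h₁₂ : a₁ ≠ a₂) (h₁₃ : a₁ ≠ a₃)
    (h₂₃ : a₂ ≠ a₃)
    (hb₁ : b₁ ∈ privateNeighbors G I U a₁) (hb₂ : b₂ ∈ privateNeighbors G I U a₂)
    (hb₃ : b₃ ∈ privateNeighbors G I U a₃) (hb₁₂ : G.Adj b₁ b₂) (hb₁₃ : G.Adj b₁ b₃) :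
    ¬ G.Adj b₂ b₃ := fun hb₂₃ =>
  hG <| hatC5_isIndContained hb₁₂ (adj_of_mem_privateNeighbors hb₂ ha₂).symm
    (h.adj a₂ ha₂).symm (h.adj a₁ ha₁) (adj_of_mem_privateNeighbors hb₁ ha₁) hb₁₃.symm hb₂₃.symm
    (mt G.adj_symm (not_adj_of_mem_privateNeighbors hb₁ ha₂ h₁₂.symm))
    (h.not_adj (privateNeighbors_subset _ _ _ _ hb₁))
    (h.not_adj (privateNeighbors_subset _ _ _ _ hb₂))
    (mt G.adj_symm (not_adj_of_mem_privateNeighbors hb₂ ha₁ h₁₂))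
    (h.isIndepSet ha₂ ha₁ h₁₂.symm)
    (mt G.adj_symm (not_adj_of_mem_privateNeighbors hb₃ ha₂ h₂₃))
    (h.not_adj (privateNeighbors_subset _ _ _ _ hb₃))
    (mt G.adj_symm (not_adj_of_mem_privateNeighbors hb₃ ha₁ h₁₃))

/-- Indices are adjacent if the corresponding sets of the family `C` are not anticomplete. -/
def patternGraph {ι : Type*} (G : SimpleGraph V) (C : ι → Finset V) : SimpleGraph ι where
  Adj i j := i ≠ j ∧ ¬ Gᶜ.IsCompleteBetween (C i) (C j)
  symm := ⟨fun _ _ h => ⟨h.1.symm, fun hc => h.2 hc.symm⟩⟩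
  loopless := ⟨fun _ h => h.1 rfl⟩

lemma IsApex.cliqueFreeOn_patternGraph (h : IsApex G v I U) (hG : ¬ hatC5 ⊴ G) {C : V → Finset V}
    (hC : ∀ a ∈ I, C a ⊆ privateNeighbors G I U a)
    (hconn : ∀ a ∈ I, (G.induce (C a : Set V)).Preconnected) :
    (patternGraph G C).CliqueFreeOn I 3 := by
  classical
  intro t htI ht
  obtain ⟨a₁, a₂, a₃, h₁₂, h₁₃, h₂₃, rfl⟩ := is3Clique_iff.1 ht
  simp only [coe_insert, coe_singleton, Set.insert_subset_iff, Set.singleton_subset_iff,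
    mem_coe] at htI
  obtain ⟨ha₁, ha₂, ha₃⟩ := htI
  have hcomplete : ∀ {a a'}, a ∈ I → a' ∈ I → (patternGraph G C).Adj a a' →
      G.IsCompleteBetween (C a) (C a') := fun {a a'} ha ha' haa' =>
    h.isCompleteBetween hG ha ha' haa'.1 (hC a ha) (hC a' ha') (hconn a ha) (hconn a' ha') haa'.2
  have hne : ∀ {a a'}, (patternGraph G C).Adj a a' → (C a).Nonempty := fun {a a'} haa' => by
    by_contra hempty
    rw [not_nonempty_iff_eq_empty] at hempty
    exact haa'.2 fun b hb => by simp [hempty] at hb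
  obtain ⟨b₁, hb₁⟩ := hne h₁₂
  obtain ⟨b₂, hb₂⟩ := hne h₂₃
  obtain ⟨b₃, hb₃⟩ := hne h₁₃.symm
  exact h.not_adj_of_adj_of_adj hG ha₁ ha₂ h₁₂.1 h₁₃.1 h₂₃.1 (hC a₁ ha₁ hb₁) (hC a₂ ha₂ hb₂)
    (hC a₃ ha₃ hb₃) (hcomplete ha₁ ha₂ h₁₂ hb₁ hb₂) (hcomplete ha₁ ha₃ h₁₃ hb₁ hb₃)
    (hcomplete ha₂ ha₃ h₂₃ hb₂ hb₃)

lemma IsCritical.exists_card_privateNeighbors_lt {d M : ℕ} {X : Finset V}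
    (hX : IsCritical G (d + 10) X) (hG : ¬ hatC5 ⊴ G) (hM : #X ≤ 2 ^ d * M) (hv : v ∈ X)
    (hUX : U ⊆ X) (h : IsApex G v I U) (hI : 3 ≤ #I) :
    ∃ a ∈ I, #(privateNeighbors G I U a) * #I ^ 2 < M := by
  by_contra! hlarge
  have hproper : ∀ {a}, privateNeighbors G I U a ⊂ X := fun {a} =>
    (ssubset_iff_of_subset ((privateNeighbors_subset G I U a).trans hUX)).2 ⟨v, hv, fun hva =>
      (h.compl_adj v (privateNeighbors_subset G I U a hva)).ne rfl⟩
  choose! C hCB hCc hconn using fun a ha =>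
    hX.exists_preconnected_subset (by omega) hM (by omega) hproper (hlarge a ha)
  obtain ⟨T, hTI, hT, hTc⟩ := exists_isIndepSet_card_eq_indepNumOn (patternGraph G C) I
  have hIT : #I ≤ #T + #T ^ 2 := hTc ▸
    card_le_indepNumOn_add_sq_of_cliqueFreeOn (h.cliqueFreeOn_patternGraph hG hCB hconn)
  have hT2 : 2 ≤ #T := by
    by_contra! hT1
    interval_cases #T <;> omega
  have hanti : (T : Set V).Pairwise fun a a' => Gᶜ.IsCompleteBetween (C a) (C a') :=
    fun a ha a' ha' haa' => by_contra fun hcon => hT ha ha' haa' ⟨haa', hcon⟩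
  obtain ⟨a, ha, hlt⟩ := hX.exists_card_mul_pow_lt_of_card_le hM hT2
    (fun a ha => (hCB a (hTI ha)).trans_ssubset hproper) hanti
  have hIT' : #I ≤ 2 * #T ^ 2 := by nlinarith
  refine absurd ?_ hlt.not_ge
  calc M ≤ #(privateNeighbors G I U a) * #I ^ 2 := hlarge a (hTI ha)
    _ ≤ 2 * #I * #(C a) * #I ^ 2 := by gcongr; exact hCc a (hTI ha)
    _ = 2 * #(C a) * #I ^ 3 := by ring
    _ ≤ 2 * #(C a) * (2 * #T ^ 2) ^ 3 := by gcongr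
    _ = #(C a) * (2 ^ 4 * #T ^ 6) := by ring
    _ ≤ #(C a) * (#T ^ 4 * #T ^ 6) := by gcongr
    _ = #(C a) * #T ^ 10 := by ring

end IsApex

/-! ### Sparse subsets of critical sets -/

lemma IsApex.mono {G : SimpleGraph V} {v : V} {I T U : Finset V} (h : IsApex G v T U)
    (hIT : I ⊆ T) : IsApex G v I U where
  isIndepSet := h.isIndepSet.mono hIT
  adj a ha := h.adj a (hIT ha)
  compl_adj := h.compl_adj

lemma IsCritical.card_le_sqrt_of_isApex {G : SimpleGraph V} {d Δ : ℕ} {ε : ℝ} {X S T U : Finset V}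
    {v : V} (hX : IsCritical G (d + 10) X) (hG : ¬ hatC5 ⊴ G) (hSX : S ⊆ X)
    (hM : #X ≤ 2 ^ d * #S) (hS : IsSparseTo G ε S S) (hε : 4 * ε < 1) (hv : v ∈ S) (hTS : T ⊆ S)
    (hUS : U ⊆ S) (h : IsApex G v T U) (hU : ∀ u ∈ U, ∃ a ∈ T, G.Adj a u)
    (hΔ : ∀ a ∈ T, #(neighborsIn G U a) ≤ Δ) : #U ≤ 5 * √(#S * Δ) := by
  refine (card_le_sqrt_or_exists_privateNeighbors G #S hU hΔ).resolve_right ?_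
  rintro ⟨I, hIT, ⟨a, ha⟩, hI⟩
  have hI3 : 3 ≤ #I := by
    by_contra! hI2
    have hpriv : privateNeighbors G I U a ⊆ neighborsIn G S a := fun u hu =>
      mem_neighborsIn.2 ⟨hUS (privateNeighbors_subset _ _ _ _ hu),
        adj_of_mem_privateNeighbors hu ha⟩
    have hle : #S ≤ #(neighborsIn G S a) * 2 ^ 2 := (hI a ha).trans
      (Nat.mul_le_mul (card_le_card hpriv) (Nat.pow_le_pow_left (by omega) 2))
    have hsparse := hS a (hTS (hIT ha))
    have hpos : (0 : ℝ) < #S := by exact_mod_cast card_pos.2 ⟨v, hv⟩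
    have hle' : (#S : ℝ) ≤ #(neighborsIn G S a) * 2 ^ 2 := by exact_mod_cast hle
    nlinarith
  obtain ⟨b, hb, hlt⟩ := hX.exists_card_privateNeighbors_lt hG hM (hSX hv) (hUS.trans hSX)
    (h.mono hIT) hI3
  exact hlt.not_ge (hI b hb)

lemma IsCritical.card_union_coveredBy_le [DecidableEq V] {G : SimpleGraph V} {d : ℕ} {ε : ℝ}
    {X S R T : Finset V} {v : V} (hX : IsCritical G (d + 10) X) (hG : ¬ hatC5 ⊴ G) (hSX : S ⊆ X)
    (hM : #X ≤ 2 ^ d * #S) (hS : IsSparseTo G ε S S) (hε : 4 * ε < 1) (hRS : R ⊆ S) (hv : v ∈ R)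
    (hmax : ∀ a ∈ R, #(neighborsIn G R a) ≤ #(neighborsIn G R v)) (hT : G.IsIndepSet T)
    (hTR : T ⊆ neighborsIn G R v) (hT0 : T.Nonempty) :
    #(T ∪ coveredBy G T R) ≤ 7 * √(#S * #(neighborsIn G R v)) := by
  set A := neighborsIn G R v with hA
  have hAR : A ⊆ R := neighborsIn_subset G R v
  set U := coveredBy G T R \ insert v A with hU
  have hUR : U ⊆ R := sdiff_subset.trans (coveredBy_subset G T R)
  have hapex : IsApex G v T U := by
    refine ⟨hT, fun a ha => (mem_neighborsIn.1 (hTR ha)).2, fun u hu => ?_⟩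
    have huvA := (mem_sdiff.1 hu).2
    rw [mem_insert, not_or] at huvA
    exact ⟨Ne.symm huvA.1, fun hvu => huvA.2 (mem_neighborsIn.2 ⟨hUR hu, hvu⟩)⟩
  have hUc : #U ≤ 5 * √(#S * #A) :=
    hX.card_le_sqrt_of_isApex hG hSX hM hS hε (hRS hv) (hTR.trans (hAR.trans hRS))
      (hUR.trans hRS) hapex (fun u hu => (mem_coveredBy.1 (mem_sdiff.1 hu).1).2) fun a ha =>
      (card_le_card (neighborsIn_mono hUR a)).trans (hmax a (hAR (hTR ha)))
  have hAS : (#A : ℝ) ≤ √(#S * #A) := by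
    refine Real.le_sqrt_of_sq_le ?_
    rw [sq]
    gcongr
    exact hAR.trans hRS
  have hcover : T ∪ coveredBy G T R ⊆ insert v A ∪ U := by
    rw [hU, union_sdiff_self_eq_union]
    exact union_subset_union_left (hTR.trans (subset_insert v A))
  have hcard : #(T ∪ coveredBy G T R) ≤ 2 * #A + #U := by
    have hA1 : 1 ≤ #A := card_pos.2 (hT0.mono hTR)
    have hins := card_insert_le v A
    have := (card_le_card hcover).trans (card_union_le _ _)
    omega
  have hcard' : (#(T ∪ coveredBy G T R) : ℝ) ≤ 2 * #A + #U := by exact_mod_cast hcard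
  linarith

lemma card_mul_le_indepNumOn_mul [DecidableEq V] {G : SimpleGraph V} {S : Finset V} {c w : ℕ}
    (h : ∀ R ⊆ S, R.Nonempty → ∃ T ⊆ R, T.Nonempty ∧ G.IsIndepSet T ∧
      c * #(T ∪ coveredBy G T R) ≤ w * #T) :
    c * #S ≤ w * indepNumOn G S := by
  induction S using Finset.strongInduction with
  | H S ih =>
  rcases S.eq_empty_or_nonempty with rfl | hS
  · simp
  obtain ⟨T, hTS, hT0, hT, hcw⟩ := h S Subset.rfl hS
  set Z := T ∪ coveredBy G T S
  have hZS : Z ⊆ S := union_subset hTS (coveredBy_subset G T S)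
  have hrest := ih (S \ Z) (sdiff_ssubset hZS (hT0.mono subset_union_left)) fun R hR =>
    h R (hR.trans sdiff_subset)
  have hadd : #T + indepNumOn G (S \ Z) ≤ indepNumOn G S := calc
    #T + indepNumOn G (S \ Z) ≤ indepNumOn G T + indepNumOn G (S \ Z) :=
      Nat.add_le_add_right (card_le_indepNumOn hT Subset.rfl) _
    _ ≤ indepNumOn G (T ∪ S \ Z) :=
      indepNumOn_add_le (isCompleteBetween_compl_sdiff_coveredBy G T S)
    _ ≤ indepNumOn G S := indepNumOn_mono G (union_subset hTS sdiff_subset)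
  calc c * #S = c * #Z + c * #(S \ Z) := by rw [← card_sdiff_add_card_eq_card hZS]; ring
    _ ≤ w * #T + w * indepNumOn G (S \ Z) := Nat.add_le_add hcw hrest
    _ = w * (#T + indepNumOn G (S \ Z)) := by ring
    _ ≤ w * indepNumOn G S := by gcongr

lemma two_le_indepNumOn_mul_of_two_le_card (G : SimpleGraph V) {X : Finset V} (h : 2 ≤ #X) :
    2 ≤ indepNumOn G X * indepNumOn Gᶜ X := by
  classical
  obtain ⟨x, hx, y, hy, hxy⟩ := one_lt_card.1 h
  have hα := indepNumOn_pos G ⟨x, hx⟩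
  have hω := indepNumOn_pos Gᶜ ⟨x, hx⟩
  have hpair : ({x, y} : Finset V) ⊆ X := by simp [insert_subset_iff, hx, hy]
  by_cases hadj : G.Adj x y
  · have hT : Gᶜ.IsIndepSet ({x, y} : Finset V) := by
      simp [IsIndepSet, Set.pairwise_pair, hadj, hadj.symm]
    have := card_le_indepNumOn hT hpair
    rw [card_pair hxy] at this
    nlinarith
  · have hT : G.IsIndepSet ({x, y} : Finset V) := by
      simp [IsIndepSet, Set.pairwise_pair, hadj, mt G.adj_symm hadj]
    have := card_le_indepNumOn hT hpair
    rw [card_pair hxy] at this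
    nlinarith

lemma IsCritical.two_le_indepNumOn_mul {G : SimpleGraph V} {D : ℕ} {X : Finset V}
    (h : IsCritical G D X) : 2 ≤ indepNumOn G X * indepNumOn Gᶜ X := by
  have hX : X.Nonempty := card_pos.1 (pos_of_gt h.lt_card)
  have hpos : 0 < (indepNumOn G X * indepNumOn Gᶜ X) ^ D :=
    pow_pos (Nat.mul_pos (indepNumOn_pos G hX) (indepNumOn_pos Gᶜ hX)) D
  exact two_le_indepNumOn_mul_of_two_le_card G (lt_of_le_of_lt hpos h.lt_card)

lemma IsCritical.two_mul_indepNumOn_mul_le {G : SimpleGraph V} {d M : ℕ} {X : Finset V}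
    (h : IsCritical G (d + 10) X) (hM : #X ≤ 2 ^ d * M) :
    2 * (indepNumOn G X * indepNumOn Gᶜ X) ≤ M := by
  have hq := h.two_le_indepNumOn_mul
  have hlt := h.lt_card.trans_le hM
  generalize indepNumOn G X * indepNumOn Gᶜ X = q at hq hlt
  refine (lt_of_mul_lt_mul_left' (a := 2 ^ d) ?_).le
  calc 2 ^ d * (2 * q) ≤ q ^ d * (q * q) := by gcongr
    _ = q ^ (d + 2) := by ring
    _ ≤ q ^ (d + 10) := Nat.pow_le_pow_right (by omega) (by omega)
    _ < 2 ^ d * M := hlt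

/-- With `t = q / (2 * a)` and `r = n / x`, the hypotheses give `t ^ 4 ≤ r` and `2 ^ 20 ≤ r`, hence
`784 * t ^ 2 ≤ r`. -/
lemma mul_sq_mul_le_sq_mul {q a x n : ℝ} {D : ℕ} (hq : 0 ≤ q) (ha : 0 < a) (hx : 0 < x)
    (hD : 4 ≤ D) (hqn : q ^ D ≤ 2 ^ D * n) (hxa : x ≤ a ^ D) (hxn : 2 ^ 20 * x ≤ n) :
    196 * q ^ 2 * x ≤ a ^ 2 * n := by
  obtain ⟨t, rfl⟩ : ∃ t, q = 2 * a * t := ⟨q / (2 * a), by field_simp⟩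
  obtain ⟨r, rfl⟩ : ∃ r, n = r * x := ⟨n / x, by field_simp⟩
  have ht : 0 ≤ t := nonneg_of_mul_nonneg_right hq (by positivity)
  have hr : 2 ^ 20 ≤ r := le_of_mul_le_mul_right hxn hx
  have htD : t ^ D ≤ r := by
    refine le_of_mul_le_mul_left ?_ (by positivity : 0 < (2 * a) ^ D)
    calc (2 * a) ^ D * t ^ D = (2 * a * t) ^ D := (mul_pow _ _ _).symm
      _ ≤ 2 ^ D * (r * x) := hqn
      _ ≤ 2 ^ D * (r * a ^ D) := by gcongr
      _ = (2 * a) ^ D * r := by ring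
  have ht4 : t ^ 4 ≤ r := by
    rcases le_total t 1 with ht1 | ht1
    · linarith [pow_le_one₀ ht ht1 (n := 4)]
    · exact (pow_le_pow_right₀ ht1 hD).trans htD
  have htr : 784 * t ^ 2 ≤ r := by
    refine abs_le_of_sq_le_sq' ?_ (by linarith) |>.2
    nlinarith
  calc 196 * (2 * a * t) ^ 2 * x = a ^ 2 * (784 * t ^ 2 * x) := by ring
    _ ≤ a ^ 2 * (r * x) := by gcongr

lemma IsCritical.mul_sqrt_le {G : SimpleGraph V} {d n : ℕ} {X A : Finset V}
    (h : IsCritical G (d + 10) X) (hM : #X ≤ 2 ^ d * n) (hAX : A ⊂ X) (hA : A.Nonempty)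
    (hAn : 2 ^ 20 * #A ≤ n) :
    14 * (indepNumOn G X * indepNumOn Gᶜ X) * √(n * #A) ≤
      indepNumOn G A * indepNumOn Gᶜ A * n := by
  have hA0 : (0 : ℝ) < #A := by exact_mod_cast hA.card_pos
  have ha0 : (0 : ℝ) < indepNumOn G A * indepNumOn Gᶜ A := by
    exact_mod_cast Nat.mul_pos (indepNumOn_pos G hA) (indepNumOn_pos Gᶜ hA)
  have hqn : (indepNumOn G X * indepNumOn Gᶜ X) ^ (d + 10) ≤ 2 ^ (d + 10) * n :=
    (h.lt_card.le.trans hM).trans (by gcongr <;> omega)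
  have hnum := mul_sq_mul_le_sq_mul (q := indepNumOn G X * indepNumOn Gᶜ X) (n := n) (D := d + 10)
    (by positivity) ha0 hA0 (by omega) (by exact_mod_cast hqn)
    (by exact_mod_cast h.card_le A hAX) (by exact_mod_cast hAn)
  refine abs_le_of_sq_le_sq' ?_ (by positivity) |>.2
  rw [mul_pow, Real.sq_sqrt (by positivity)]
  nlinarith [(n.cast_nonneg : (0 : ℝ) ≤ n)]

lemma IsCritical.exists_isIndepSet_card_mul_le [DecidableEq V] {G : SimpleGraph V} {d : ℕ}
    {X S R : Finset V} (hX : IsCritical G (d + 10) X) (hG : ¬ hatC5 ⊴ G) (hSX : S ⊆ X)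
    (hM : #X ≤ 2 ^ d * #S) (hS : IsSparseTo G (1 / 2 ^ 20) S S) (hRS : R ⊆ S) (hR : R.Nonempty) :
    ∃ T ⊆ R, T.Nonempty ∧ G.IsIndepSet T ∧
      2 * (indepNumOn G X * indepNumOn Gᶜ X) * #(T ∪ coveredBy G T R) ≤
        indepNumOn Gᶜ X * #S * #T := by
  obtain ⟨v, hv, hmax⟩ := exists_max_image R (fun a => #(neighborsIn G R a)) hR
  rcases (neighborsIn G R v).eq_empty_or_nonempty with hA | hA
  · refine ⟨{v}, by simpa using hv, singleton_nonempty v, by simp, ?_⟩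
    rw [coveredBy_singleton, hA, union_empty, card_singleton, mul_one, mul_one]
    exact (hX.two_mul_indepNumOn_mul_le hM).trans
      (Nat.le_mul_of_pos_left _ (indepNumOn_pos Gᶜ ⟨v, hSX (hRS hv)⟩))
  obtain ⟨T, hTA, hT, hTc⟩ := exists_isIndepSet_card_eq_indepNumOn G (neighborsIn G R v)
  have hT0 : T.Nonempty := card_pos.1 (hTc ▸ indepNumOn_pos G hA)
  have hAR := neighborsIn_subset G R v
  have hAX : neighborsIn G R v ⊂ X :=
    (ssubset_iff_of_subset (hAR.trans (hRS.trans hSX))).2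
      ⟨v, hSX (hRS hv), fun h => (mem_neighborsIn.1 h).2.ne rfl⟩
  refine ⟨T, hTA.trans hAR, hT0, hT, ?_⟩
  have hZ := hX.card_union_coveredBy_le hG hSX hM hS (by norm_num) hRS hv hmax hT hTA hT0
  have hAS : 2 ^ 20 * #(neighborsIn G R v) ≤ #S := by
    have hvS := hS v (hRS hv)
    have hRS' : (#(neighborsIn G R v) : ℝ) ≤ #(neighborsIn G S v) := by
      exact_mod_cast card_le_card (neighborsIn_mono hRS v)
    exact_mod_cast (by linarith : (2 ^ 20 * #(neighborsIn G R v) : ℝ) ≤ #S)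
  have hωA : (indepNumOn Gᶜ (neighborsIn G R v) : ℝ) ≤ indepNumOn Gᶜ X := by
    exact_mod_cast indepNumOn_mono Gᶜ hAX.1
  have hcount : 2 * (indepNumOn G X * indepNumOn Gᶜ X) * (#(T ∪ coveredBy G T R) : ℝ) ≤
      indepNumOn Gᶜ X * #S * #T := by
    calc 2 * (indepNumOn G X * indepNumOn Gᶜ X) * (#(T ∪ coveredBy G T R) : ℝ)
        ≤ 2 * (indepNumOn G X * indepNumOn Gᶜ X) * (7 * √(#S * #(neighborsIn G R v))) := by gcongr
      _ = 14 * (indepNumOn G X * indepNumOn Gᶜ X) * √(#S * #(neighborsIn G R v)) := by ring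
      _ ≤ #T * indepNumOn Gᶜ (neighborsIn G R v) * #S := hTc ▸ hX.mul_sqrt_le hM hAX hA hAS
      _ ≤ #T * indepNumOn Gᶜ X * #S := by gcongr
      _ = indepNumOn Gᶜ X * #S * #T := by ring
  exact_mod_cast hcount

lemma IsCritical.not_isSparseTo {G : SimpleGraph V} {d : ℕ} {X S : Finset V}
    (hX : IsCritical G (d + 10) X) (hG : ¬ hatC5 ⊴ G) (hSX : S ⊆ X) (hM : #X ≤ 2 ^ d * #S) :
    ¬ IsSparseTo G (1 / 2 ^ 20) S S := by
  classical
  intro hS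
  have hgreedy := card_mul_le_indepNumOn_mul fun R hRS hR =>
    hX.exists_isIndepSet_card_mul_le hG hSX hM hS hRS hR
  have hq := hX.two_le_indepNumOn_mul
  have hSpos : 0 < #S := by linarith [hX.two_mul_indepNumOn_mul_le hM]
  have hle : 2 * (indepNumOn G X * indepNumOn Gᶜ X) * #S ≤
      indepNumOn G X * indepNumOn Gᶜ X * #S := by
    calc _ ≤ indepNumOn Gᶜ X * #S * indepNumOn G S := hgreedy
      _ ≤ indepNumOn Gᶜ X * #S * indepNumOn G X := by gcongr; exact indepNumOn_mono G hSX
      _ = indepNumOn G X * indepNumOn Gᶜ X * #S := by ring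
  have := Nat.le_of_mul_le_mul_right hle hSpos
  omega

/-! ### The Erdős–Hajnal bound -/

lemma exists_isCritical {G : SimpleGraph V} {D : ℕ} {X : Finset V}
    (hX : (indepNumOn G X * indepNumOn Gᶜ X) ^ D < #X) : ∃ Y ⊆ X, IsCritical G D Y := by
  obtain ⟨Y, hYX, hY⟩ := exists_minimal_le_of_wellFoundedLT
    (fun Y => (indepNumOn G Y * indepNumOn Gᶜ Y) ^ D < #Y) X hX
  obtain ⟨hlt, hmin⟩ := minimal_iff_forall_lt.1 hY
  exact ⟨Y, hYX, fun Z hZ => not_lt.1 (hmin hZ), hlt⟩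

lemma exists_card_le_indepNumOn_mul_pow :
    ∃ D : ℕ, 0 < D ∧ ∀ {V : Type*} (G : SimpleGraph V) (X : Finset V),
      ¬ hatC5 ⊴ G → ¬ hatC5ᶜ ⊴ G → #X ≤ (indepNumOn G X * indepNumOn Gᶜ X) ^ D := by
  obtain ⟨δ, hδ, hRödl⟩ := exists_isSparseTo_self_or_compl hatC5 (ε := 1 / 2 ^ 20) (by norm_num)
    (by norm_num)
  obtain ⟨d, hd⟩ := pow_unbounded_of_one_lt (1 / δ) one_lt_two
  refine ⟨d + 10, by omega, fun {V} G X hG hGc => ?_⟩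
  by_contra! hcon
  obtain ⟨Y, -, hY⟩ := exists_isCritical hcon
  obtain ⟨S, hSY, hSc, hS⟩ := hRödl G Y hG (card_pos.1 (pos_of_gt hY.lt_card))
  have hM : #Y ≤ 2 ^ d * #S := by
    have hle : (#Y : ℝ) ≤ 2 ^ d * #S := calc
      (#Y : ℝ) = 1 / δ * (δ * #Y) := by field_simp
      _ ≤ 2 ^ d * #S := by gcongr
    exact_mod_cast hle
  rcases hS with hS | hS
  · exact hY.not_isSparseTo hG hSY hM hS
  · refine hY.compl.not_isSparseTo (fun h => hGc ?_) hSY hM hS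
    exact compl_isIndContained_compl.1 (by rwa [compl_compl])

end

/-- `{Ĉ₅, complement of Ĉ₅}` has the Erdős–Hajnal property. -/
theorem stmt_1 :
    ∃ τ : ℝ, 0 < τ ∧
      ∀ (V : Type) [Fintype V] (G : SimpleGraph V),
        ¬ Nonempty (hatC5 ↪g G) →
        ¬ Nonempty (hatC5ᶜ ↪g G) →
        (Fintype.card V : ℝ) ^ τ ≤ ((max (alphaNum G) (omegaNum G) : ℕ) : ℝ) := by
  obtain ⟨D, hD, hcard⟩ := exists_card_le_indepNumOn_mul_pow
  refine ⟨((2 * D : ℕ) : ℝ)⁻¹, by positivity, fun V _ G hG hGc => ?_⟩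
  have hα : indepNumOn G Finset.univ ≤ max (alphaNum G) (omegaNum G) := by
    rw [alphaNum, cliqueNum_compl]
    exact (indepNumOn_le_indepNum G _).trans (le_max_left _ _)
  have hω : indepNumOn Gᶜ Finset.univ ≤ max (alphaNum G) (omegaNum G) := by
    rw [omegaNum, ← indepNum_compl]
    exact (indepNumOn_le_indepNum Gᶜ _).trans (le_max_right _ _)
  have hV : Fintype.card V ≤ max (alphaNum G) (omegaNum G) ^ (2 * D) := by
    rw [pow_mul, sq]
    exact (hcard G Finset.univ hG hGc).trans (Nat.pow_le_pow_left (Nat.mul_le_mul hα hω) D)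
  rw [Real.rpow_inv_le_iff_of_pos (by positivity) (by positivity) (by positivity),
    Real.rpow_natCast]
  exact_mod_cast hV
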